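/- Let G = ∫₀¹ (arctan x)/x dx denote Catalan's constant (equivalently, G = (1/2)·∫₀^{π/2} x/(sin x) dx). Then (√15/4)·ln((4·cos(√15·π/10) + 3·sin(√15·π/10) + 5)/(4·cos(√15·π/10) − 3·sin(√15·π/10) + 5)) < G < (√15/5)·ln((11·√(2 − √2) + 3·√15·√(√2 + 2) + 32)/(11·√(2 − √2) − 3·√15·√(√2 + 2) + 32)). -/

import Mathlib

open Real

lemma aux_mono {f f' : ℝ → ℝ} (h0 : f 0 = 0) (hd : ∀ x, HasDerivAt f (f' x) x)
    (hp : ∀ x, 0 < x → x < 1 → 0 ≤ f' x) {x : ℝ} (hx : 0 ≤ x) (hx1 : x ≤ 1) : 0 ≤ f x := by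
  have hm : MonotoneOn f (Set.Icc 0 1) := by
    apply monotoneOn_of_hasDerivWithinAt_nonneg (f' := f') (convex_Icc 0 1)
    · exact fun y _ => (hd y).continuousAt.continuousWithinAt
    · exact fun y _ => (hd y).hasDerivWithinAt
    · intro y hy
      rw [interior_Icc] at hy
      exact hp y hy.1 hy.2
  have := hm (Set.left_mem_Icc.2 zero_le_one) ⟨hx, hx1⟩ hx
  rwa [h0] at this

lemma aux_cos {x : ℝ} (hx : 0 ≤ x) (hx1 : x ≤ 1) : cos x ≤ 1 - x^2/2 + x^4/24 := by
  have := aux_mono (f := fun x => 1 - x^2/2 + x^4/24 - cos x)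
    (f' := fun x => - x + x^3/6 + sin x) (by simp) (by
      intro y
      have h := ((((hasDerivAt_id y).pow 2).div_const 2).const_sub 1).add
        (((hasDerivAt_id y).pow 4).div_const 24) |>.sub (hasDerivAt_cos y)
      refine HasDerivAt.congr_deriv h ?_
      simp; ring) (by
      intro y hy _
      have := sin_ge_sub_cube hy.le
      linarith) hx hx1
  linarith

lemma aux_pow (c : ℝ) (n : ℕ) (x : ℝ) :
    HasDerivAt (fun x : ℝ => c * x^(n+1)) (c * ((n+1) * x^n)) x := by
  simpa using (hasDerivAt_pow (n+1) x).const_mul c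

lemma aux_lower {x : ℝ} (hx : 0 < x) (hx1 : x ≤ 1) :
    (1)*x^0 + (-1/3)*x^2 + (1/5)*x^4 + (-1/7)*x^6 + (1/9)*x^8 + (-1/11)*x^10 + (1/13)*x^12 + (-1/15)*x^14 + (1/17)*x^16 + (-1/19)*x^18 + (1/28)*x^20 + (-1/92)*x^22 ≤ arctan x / x := by
  have := aux_mono (f := fun x => arctan x - ((1)*x^1 + (-1/3)*x^3 + (1/5)*x^5 + (-1/7)*x^7 + (1/9)*x^9 + (-1/11)*x^11 + (1/13)*x^13 + (-1/15)*x^15 + (1/17)*x^17 + (-1/19)*x^19 + (1/28)*x^21 + (-1/92)*x^23))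
    (f' := fun x => 1/(1+x^2) - ((1)*x^0 + (-1)*x^2 + (1)*x^4 + (-1)*x^6 + (1)*x^8 + (-1)*x^10 + (1)*x^12 + (-1)*x^14 + (1)*x^16 + (-1)*x^18 + (3/4)*x^20 + (-1/4)*x^22)) (by simp) (by
      intro y
      have h := (hasDerivAt_arctan y).sub (((aux_pow (1) 0 y) |>.add (aux_pow (-1/3) 2 y) |>.add (aux_pow (1/5) 4 y) |>.add (aux_pow (-1/7) 6 y) |>.add (aux_pow (1/9) 8 y) |>.add (aux_pow (-1/11) 10 y) |>.add (aux_pow (1/13) 12 y) |>.add (aux_pow (-1/15) 14 y) |>.add (aux_pow (1/17) 16 y) |>.add (aux_pow (-1/19) 18 y) |>.add (aux_pow (1/28) 20 y) |>.add (aux_pow (-1/92) 22 y)))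
      refine HasDerivAt.congr_deriv h ?_
      push_cast
      ring) (by
      intro y hy hy1
      have h1 : y^2 ≤ 1 := by nlinarith
      have h2 : 0 ≤ 1 - y^2 := by linarith
      have e : 1/(1+y^2) - ((1)*y^0 + (-1)*y^2 + (1)*y^4 + (-1)*y^6 + (1)*y^8 + (-1)*y^10 + (1)*y^12 + (-1)*y^14 + (1)*y^16 + (-1)*y^18 + (3/4)*y^20 + (-1/4)*y^22) = y^20*(1-y^2)^2/4/(1+y^2) := by
        field_simp
        ring
      rw [e]
      positivity) hx.le hx1
  rw [le_div_iff₀ hx]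
  nlinarith [this]

lemma aux_upper {x : ℝ} (hx : 0 < x) (hx1 : x ≤ 1) :
    arctan x / x ≤ (1)*x^0 + (-1/3)*x^2 + (1/5)*x^4 + (-1/7)*x^6 + (1/9)*x^8 + (-1/11)*x^10 + (1/13)*x^12 + (-1/30)*x^14 := by
  have := aux_mono (f := fun x => ((1)*x^1 + (-1/3)*x^3 + (1/5)*x^5 + (-1/7)*x^7 + (1/9)*x^9 + (-1/11)*x^11 + (1/13)*x^13 + (-1/30)*x^15) - arctan x)
    (f' := fun x => ((1)*x^0 + (-1)*x^2 + (1)*x^4 + (-1)*x^6 + (1)*x^8 + (-1)*x^10 + (1)*x^12 + (-1/2)*x^14) - 1/(1+x^2)) (by simp) (by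
      intro y
      have h := ((aux_pow (1) 0 y) |>.add (aux_pow (-1/3) 2 y) |>.add (aux_pow (1/5) 4 y) |>.add (aux_pow (-1/7) 6 y) |>.add (aux_pow (1/9) 8 y) |>.add (aux_pow (-1/11) 10 y) |>.add (aux_pow (1/13) 12 y) |>.add (aux_pow (-1/30) 14 y)) |>.sub (hasDerivAt_arctan y)
      refine HasDerivAt.congr_deriv h ?_
      push_cast
      ring) (by
      intro y hy hy1
      have h1 : y^2 ≤ 1 := by nlinarith
      have h2 : 0 ≤ 1 - y^2 := by linarith
      have e : ((1)*y^0 + (-1)*y^2 + (1)*y^4 + (-1)*y^6 + (1)*y^8 + (-1)*y^10 + (1)*y^12 + (-1/2)*y^14) - 1/(1+y^2) = y^12*(y^2*(1-y^2))/2/(1+y^2) := by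
        field_simp
        ring
      rw [e]
      positivity) hx.le hx1
  rw [div_le_iff₀ hx]
  nlinarith [this]

lemma aux_int : IntervalIntegrable (fun x : ℝ => arctan x / x) MeasureTheory.volume 0 1 := by
  rw [intervalIntegrable_iff_integrableOn_Ioc_of_le zero_le_one]
  apply MeasureTheory.Measure.integrableOn_of_bounded (M := 1) (by simp)
  · exact (measurable_arctan.div measurable_id).aestronglyMeasurable
  · filter_upwards [MeasureTheory.ae_restrict_mem measurableSet_Ioc] with x hx
    have h0 : 0 < x := hx.1
    have h1 : 0 ≤ arctan x := arctan_nonneg.2 h0.le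
    rw [norm_of_nonneg (by positivity), div_le_one h0]
    have := aux_mono (f := fun x => x - arctan x) (f' := fun x => 1 - 1/(1+x^2)) (by simp)
      (fun y => (hasDerivAt_id y).sub (hasDerivAt_arctan y)) (by
        intro y _ _
        simp only [sub_nonneg]
        rw [div_le_one (by positivity)]
        nlinarith [sq_nonneg y]) h0.le hx.2
    linarith

lemma aux_mon (c : ℝ) (n : ℕ) : ∫ x in (0:ℝ)..1, c * x^n = c / (n+1) := by
  rw [intervalIntegral.integral_const_mul, integral_pow]
  simp; ring

lemma aux_c {f : ℝ → ℝ} (h : Continuous f) : IntervalIntegrable f MeasureTheory.volume 0 1 :=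
  h.intervalIntegrable 0 1

lemma aux_il : ∫ x in (0:ℝ)..1, ((1)*x^0 + (-1/3)*x^2 + (1/5)*x^4 + (-1/7)*x^6 + (1/9)*x^8 + (-1/11)*x^10 + (1/13)*x^12 + (-1/15)*x^14 + (1/17)*x^16 + (-1/19)*x^18 + (1/28)*x^20 + (-1/92)*x^22) = 205143151790803829/223966928901766050 := by
  have := intervalIntegral.integral_eq_sub_of_hasDerivAt (a := 0) (b := 1)
    (f := fun x : ℝ => (1)*x^1 + (-1/9)*x^3 + (1/25)*x^5 + (-1/49)*x^7 + (1/81)*x^9 + (-1/121)*x^11 + (1/169)*x^13 + (-1/225)*x^15 + (1/289)*x^17 + (-1/361)*x^19 + (1/588)*x^21 + (-1/2116)*x^23) (f' := fun x : ℝ => (1)*x^0 + (-1/3)*x^2 + (1/5)*x^4 + (-1/7)*x^6 + (1/9)*x^8 + (-1/11)*x^10 + (1/13)*x^12 + (-1/15)*x^14 + (1/17)*x^16 + (-1/19)*x^18 + (1/28)*x^20 + (-1/92)*x^22)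
    (by
      intro y _
      have h := (aux_pow (1) 0 y) |>.add (aux_pow (-1/9) 2 y) |>.add (aux_pow (1/25) 4 y) |>.add (aux_pow (-1/49) 6 y) |>.add (aux_pow (1/81) 8 y) |>.add (aux_pow (-1/121) 10 y) |>.add (aux_pow (1/169) 12 y) |>.add (aux_pow (-1/225) 14 y) |>.add (aux_pow (1/289) 16 y) |>.add (aux_pow (-1/361) 18 y) |>.add (aux_pow (1/588) 20 y) |>.add (aux_pow (-1/2116) 22 y)
      refine HasDerivAt.congr_deriv h ?_
      push_cast
      ring)
    (aux_c (by fun_prop))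
  rw [this]
  norm_num

lemma aux_iu : ∫ x in (0:ℝ)..1, ((1)*x^0 + (-1/3)*x^2 + (1/5)*x^4 + (-1/7)*x^6 + (1/9)*x^8 + (-1/11)*x^10 + (1/13)*x^12 + (-1/30)*x^14) = 3718265753/4058104050 := by
  have := intervalIntegral.integral_eq_sub_of_hasDerivAt (a := 0) (b := 1)
    (f := fun x : ℝ => (1)*x^1 + (-1/9)*x^3 + (1/25)*x^5 + (-1/49)*x^7 + (1/81)*x^9 + (-1/121)*x^11 + (1/169)*x^13 + (-1/450)*x^15) (f' := fun x : ℝ => (1)*x^0 + (-1/3)*x^2 + (1/5)*x^4 + (-1/7)*x^6 + (1/9)*x^8 + (-1/11)*x^10 + (1/13)*x^12 + (-1/30)*x^14)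
    (by
      intro y _
      have h := (aux_pow (1) 0 y) |>.add (aux_pow (-1/9) 2 y) |>.add (aux_pow (1/25) 4 y) |>.add (aux_pow (-1/49) 6 y) |>.add (aux_pow (1/81) 8 y) |>.add (aux_pow (-1/121) 10 y) |>.add (aux_pow (1/169) 12 y) |>.add (aux_pow (-1/450) 14 y)
      refine HasDerivAt.congr_deriv h ?_
      push_cast
      ring)
    (aux_c (by fun_prop))
  rw [this]
  norm_num

lemma aux_Glow : (0.91595:ℝ) < ∫ x in (0:ℝ)..1, arctan x / x := by
  have h := intervalIntegral.integral_mono_on_of_le_Ioo (zero_le_one (α := ℝ))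
    (f := fun x : ℝ => (1)*x^0 + (-1/3)*x^2 + (1/5)*x^4 + (-1/7)*x^6 + (1/9)*x^8 + (-1/11)*x^10 + (1/13)*x^12 + (-1/15)*x^14 + (1/17)*x^16 + (-1/19)*x^18 + (1/28)*x^20 + (-1/92)*x^22) (g := fun x => arctan x / x) (μ := MeasureTheory.volume)
    (aux_c (by fun_prop)) aux_int (fun x hx => aux_lower hx.1 hx.2.le)
  simp only [aux_il] at h
  refine lt_of_lt_of_le ?_ h
  norm_num

lemma aux_Gup : (∫ x in (0:ℝ)..1, arctan x / x) < (0.91626:ℝ) := by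
  have h := intervalIntegral.integral_mono_on_of_le_Ioo (zero_le_one (α := ℝ))
    (g := fun x : ℝ => (1)*x^0 + (-1/3)*x^2 + (1/5)*x^4 + (-1/7)*x^6 + (1/9)*x^8 + (-1/11)*x^10 + (1/13)*x^12 + (-1/30)*x^14) (f := fun x => arctan x / x) (μ := MeasureTheory.volume)
    aux_int (aux_c (by fun_prop)) (fun x hx => aux_upper hx.1 hx.2.le)
  simp only [aux_iu] at h
  refine lt_of_le_of_lt h ?_
  norm_num

lemma aux_exp1 : (2.57525:ℝ) < exp 0.94597 := by
  refine lt_of_lt_of_le ?_ (sum_le_exp_of_nonneg (by norm_num) 10)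
  norm_num [Finset.sum_range_succ, Nat.factorial]

lemma aux_exp2 : exp 1.183 < (3.265:ℝ) := by
  have h : exp 0.183 ≤ 1.2009 := by
    refine (exp_bound' (by norm_num) (by norm_num) (n := 5) (by norm_num)).trans ?_
    norm_num [Finset.sum_range_succ, Nat.factorial]
  have h1 := exp_one_lt_d9
  have e : exp 1.183 = exp 1 * exp 0.183 := by rw [← exp_add]; norm_num
  rw [e]
  have := exp_pos 0.183
  have := exp_pos 1
  nlinarith

lemma aux_s15 : (3.87298334:ℝ) < √15 ∧ √15 < 3.87298335 :=
  ⟨by rw [lt_sqrt (by norm_num)]; norm_num, by rw [sqrt_lt' (by norm_num)]; norm_num⟩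

lemma aux_s2 : (1.414213:ℝ) < √2 ∧ √2 < 1.414214 :=
  ⟨by rw [lt_sqrt (by norm_num)]; norm_num, by rw [sqrt_lt' (by norm_num)]; norm_num⟩

lemma aux_R1 : (4 * cos (√15 * π / 10) + 3 * sin (√15 * π / 10) + 5) /
    (4 * cos (√15 * π / 10) - 3 * sin (√15 * π / 10) + 5) < 2.57525 ∧
    0 < (4 * cos (√15 * π / 10) + 3 * sin (√15 * π / 10) + 5) /
    (4 * cos (√15 * π / 10) - 3 * sin (√15 * π / 10) + 5) := by
  obtain ⟨a1, a2⟩ := aux_s15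
  have p1 := pi_gt_d6
  have p2 := pi_lt_d6
  obtain ⟨δ, hδ⟩ : ∃ δ, δ = π / 2 - √15 * π / 10 := ⟨_, rfl⟩
  have d1 : 0.354062 < δ := by rw [hδ]; nlinarith
  have d2 : δ < 0.354064 := by rw [hδ]; nlinarith
  have e : √15 * π / 10 = π / 2 - δ := by rw [hδ]; ring
  rw [e, cos_pi_div_two_sub, sin_pi_div_two_sub]
  have hc := aux_cos (x := δ) (by linarith) (by linarith)
  have hs := sin_ge_sub_cube (x := δ) (by linarith)
  have q1 : (0.354062:ℝ)^2 < δ^2 := by gcongr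
  have q2 : δ^3 < (0.354064:ℝ)^3 := by gcongr
  have q4 : δ^4 < (0.354064:ℝ)^4 := by gcongr
  have hcp : 0 ≤ cos δ := cos_nonneg_of_neg_pi_div_two_le_of_le (by linarith) (by linarith)
  have hden : 0 < 4 * sin δ - 3 * cos δ + 5 := by linarith
  constructor
  · rw [div_lt_iff₀ hden]
    linarith
  · apply div_pos _ hden
    linarith

lemma aux_R2 : 3.265 < (11 * √(2 - √2) + 3 * √15 * √(√2 + 2) + 32) /
    (11 * √(2 - √2) - 3 * √15 * √(√2 + 2) + 32) := by
  obtain ⟨a1, a2⟩ := aux_s15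
  obtain ⟨b1, b2⟩ := aux_s2
  have c2 : √(2 - √2) < 0.765368 := by rw [sqrt_lt' (by norm_num)]; norm_num; linarith
  have c1 : 0 ≤ √(2 - √2) := sqrt_nonneg _
  have d1 : 1.847758 < √(√2 + 2) := by rw [lt_sqrt (by norm_num)]; norm_num; linarith
  have d2 : √(√2 + 2) < 1.847760 := by rw [sqrt_lt' (by norm_num)]; norm_num; linarith
  have m1 : 3.87298334 * 1.847758 < √15 * √(√2 + 2) := by gcongr
  have m2 : √15 * √(√2 + 2) < 3.87298335 * 1.847760 := by gcongr
  have hden : 0 < 11 * √(2 - √2) - 3 * √15 * √(√2 + 2) + 32 := by linarith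
  rw [lt_div_iff₀ hden]
  linarith

/-- Estimates for Catalan's constant `G = ∫₀¹ (arctan x)/x dx`:
`(√15/4)·ln((4cos(√15π/10) + 3sin(√15π/10) + 5)/(4cos(√15π/10) − 3sin(√15π/10) + 5))
 < G < (√15/5)·ln((11√(2−√2) + 3√15·√(√2+2) + 32)/(11√(2−√2) − 3√15·√(√2+2) + 32))`. -/
theorem stmt_17 :
    Real.sqrt 15 / 4 *
        Real.log ((4 * Real.cos (Real.sqrt 15 * π / 10) + 3 * Real.sin (Real.sqrt 15 * π / 10) + 5) /
          (4 * Real.cos (Real.sqrt 15 * π / 10) - 3 * Real.sin (Real.sqrt 15 * π / 10) + 5)) <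
      (∫ x in (0 : ℝ)..1, Real.arctan x / x) ∧
    (∫ x in (0 : ℝ)..1, Real.arctan x / x) <
      Real.sqrt 15 / 5 *
        Real.log ((11 * Real.sqrt (2 - Real.sqrt 2) + 3 * Real.sqrt 15 * Real.sqrt (Real.sqrt 2 + 2) + 32) /
          (11 * Real.sqrt (2 - Real.sqrt 2) - 3 * Real.sqrt 15 * Real.sqrt (Real.sqrt 2 + 2) + 32)) := by
  obtain ⟨a1, a2⟩ := aux_s15
  constructor
  · refine lt_trans ?_ aux_Glow
    obtain ⟨h1, h0⟩ := aux_R1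
    have h := (log_lt_iff_lt_exp h0).2 (h1.trans aux_exp1)
    have h3 : √15 / 4 * log _ < √15 / 4 * 0.94597 := mul_lt_mul_of_pos_left h (by linarith)
    linarith
  · refine lt_trans aux_Gup ?_
    have h1 := aux_R2
    have h := (lt_log_iff_exp_lt (lt_trans (by norm_num) h1)).2 (aux_exp2.trans h1)
    have h3 : √15 / 5 * 1.183 < √15 / 5 * log _ := mul_lt_mul_of_pos_left h (by linarith)
    linarith
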